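/- The number of non-crossing partitions of {1, …, 2k} all of whose blocks have even size, having exactly b blocks, equals the Fuss–Narayana number F_{k,b} = (1/b) · binom(k−1, b−1) · binom(2k, b−1). -/

import Mathlib

open Finset

/-- A partition of `{1,…,m}` is non-crossing if there are no `a < b < c < d` with
`a, c` in one block and `b, d` in a different block. -/
def IsNonCrossing {m : ℕ} (P : Finpartition (Finset.univ : Finset (Fin m))) : Prop :=
  ∀ a b c d : Fin m, a < b → b < c → c < d →
    ∀ B ∈ P.parts, ∀ C ∈ P.parts, a ∈ B → c ∈ B → b ∈ C → d ∈ C → B = C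

section Words

variable {α : Type*} [LinearOrder α]

/-- `F` is a family of nonempty pairwise disjoint blocks with union `S`. -/
structure IsBlockFamily (S : Finset α) (F : Finset (Finset α)) : Prop where
  sup_eq : F.sup id = S
  disjoint : ∀ B ∈ F, ∀ C ∈ F, ∀ x ∈ B, x ∈ C → B = C
  nonempty : ∀ B ∈ F, B.Nonempty

/-- No two distinct blocks of `F` cross. -/
def NonCrossingFamily (F : Finset (Finset α)) : Prop :=
  ∀ a b c d : α, a < b → b < c → c < d →
    ∀ B ∈ F, ∀ C ∈ F, a ∈ B → c ∈ B → b ∈ C → d ∈ C → B = C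

/-- The word recording, at the minimum of each block, the size of that block, and `0` elsewhere. -/
def openerWord (F : Finset (Finset α)) (i : α) : ℕ :=
  ∑ B ∈ F, if B.min = (i : WithTop α) then #B else 0

/-- Łukasiewicz words indexed by `S`: words of weight `#S` all of whose prefixes weigh at least
their length. -/
structure IsLukasiewicz (S : Finset α) (w : α → ℕ) : Prop where
  eq_zero : ∀ i ∉ S, w i = 0
  sum_eq : ∑ i ∈ S, w i = #S
  card_le_sum : ∀ j, #{x ∈ S | x < j} ≤ ∑ x ∈ S with x < j, w x

namespace IsBlockFamily

variable {S : Finset α} {F G : Finset (Finset α)}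

lemma subset (h : IsBlockFamily S F) {B : Finset α} (hB : B ∈ F) : B ⊆ S := by
  rw [← h.sup_eq]
  exact Finset.le_sup (f := id) hB

lemma exists_mem (h : IsBlockFamily S F) {x : α} (hx : x ∈ S) : ∃ B ∈ F, x ∈ B := by
  rw [← h.sup_eq, Finset.mem_sup] at hx
  exact hx

lemma pairwiseDisjoint (h : IsBlockFamily S F) : (F : Set (Finset α)).PairwiseDisjoint id := by
  intro B hB C hC hBC
  rw [Function.onFun, Finset.disjoint_left]
  exact fun x hx hx' => hBC (h.disjoint B hB C hC x hx hx')

lemma eq_of_min_eq (h : IsBlockFamily S F) {B C : Finset α} (hB : B ∈ F) (hC : C ∈ F) {i : α}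
    (hBi : B.min = (i : WithTop α)) (hCi : C.min = (i : WithTop α)) : B = C :=
  h.disjoint B hB C hC i (Finset.mem_of_min hBi) (Finset.mem_of_min hCi)

lemma openerWord_eq (h : IsBlockFamily S F) {B : Finset α} (hB : B ∈ F) {i : α}
    (hi : B.min = (i : WithTop α)) : openerWord F i = #B := by
  rw [openerWord, Finset.sum_eq_single_of_mem B hB, if_pos hi]
  intro C hC hCB
  exact if_neg fun hCi => hCB (h.eq_of_min_eq hC hB hCi hi)

lemma openerWord_ne_zero_iff (h : IsBlockFamily S F) {i : α} :
    openerWord F i ≠ 0 ↔ ∃ B ∈ F, B.min = (i : WithTop α) := by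
  constructor
  · intro hi
    obtain ⟨B, hB, hBi⟩ := Finset.exists_ne_zero_of_sum_ne_zero hi
    exact ⟨B, hB, by by_contra hc; simp [hc] at hBi⟩
  · rintro ⟨B, hB, hi⟩
    rw [h.openerWord_eq hB hi]
    exact (h.nonempty B hB).card_ne_zero

lemma exists_min (h : IsBlockFamily S F) {B : Finset α} (hB : B ∈ F) :
    ∃ i : α, B.min = (i : WithTop α) :=
  Finset.min_of_nonempty (h.nonempty B hB)

lemma card_filter_eq (h : IsBlockFamily S F) (p : α → Prop) [DecidablePred p] :
    #{x ∈ S | p x} = ∑ B ∈ F, #{x ∈ B | p x} := by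
  rw [← Finset.card_biUnion]
  · congr 1
    ext x
    simp only [mem_filter, mem_biUnion]
    constructor
    · rintro ⟨hx, hp⟩
      obtain ⟨B, hB, hxB⟩ := h.exists_mem hx
      exact ⟨B, hB, hxB, hp⟩
    · rintro ⟨B, hB, hxB, hp⟩
      exact ⟨h.subset hB hxB, hp⟩
  · intro B hB C hC hBC
    exact (h.pairwiseDisjoint hB hC hBC).mono (filter_subset _ _) (filter_subset _ _)

open Classical in
lemma sum_openerWord (h : IsBlockFamily S F) (p : α → Prop) [DecidablePred p] :
    ∑ i ∈ S with p i, openerWord F i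
      = ∑ B ∈ F, if ∃ i, p i ∧ B.min = (i : WithTop α) then #B else 0 := by
  simp only [openerWord]
  rw [Finset.sum_comm]
  refine Finset.sum_congr rfl fun B hB => ?_
  obtain ⟨i, hi⟩ := h.exists_min hB
  simp only [hi, WithTop.coe_inj, Finset.sum_ite_eq, mem_filter, exists_eq_right',
    h.subset hB (Finset.mem_of_min hi), true_and]

lemma isLukasiewicz (h : IsBlockFamily S F) : IsLukasiewicz S (openerWord F) := by
  classical
  refine ⟨fun i hi => ?_, ?_, fun j => ?_⟩
  · by_contra hne
    obtain ⟨B, hB, hBi⟩ := h.openerWord_ne_zero_iff.1 hne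
    exact hi (h.subset hB (Finset.mem_of_min hBi))
  · have h₁ := h.sum_openerWord fun _ => True
    have h₂ := h.card_filter_eq fun _ => True
    simp only [Finset.filter_true, true_and] at h₁ h₂
    rw [h₁, h₂]
    exact Finset.sum_congr rfl fun B hB => if_pos (h.exists_min hB)
  · rw [h.sum_openerWord, h.card_filter_eq]
    refine Finset.sum_le_sum fun B hB => ?_
    split_ifs with hc
    · exact Finset.card_filter_le _ _
    · obtain ⟨i, hi⟩ := h.exists_min hB
      rw [Nat.le_zero, Finset.card_eq_zero, Finset.filter_eq_empty_iff]
      exact fun x hx hxj => hc ⟨i, (Finset.min_le_of_eq hx hi).trans_lt hxj, hi⟩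

lemma card_eq (h : IsBlockFamily S F) : #F = #{i ∈ S | openerWord F i ≠ 0} := by
  refine Finset.card_bij (fun B hB => B.min' (h.nonempty B hB)) ?_ ?_ ?_
  · intro B hB
    exact mem_filter.2 ⟨h.subset hB (Finset.min'_mem _ _),
      h.openerWord_ne_zero_iff.2 ⟨B, hB, (Finset.coe_min' _).symm⟩⟩
  · intro B hB C hC hBC
    refine h.eq_of_min_eq hB hC (Finset.coe_min' (h.nonempty B hB)).symm ?_
    rw [hBC, Finset.coe_min']
  · intro i hi
    obtain ⟨B, hB, hBi⟩ := h.openerWord_ne_zero_iff.1 (mem_filter.1 hi).2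
    exact ⟨B, hB, WithTop.coe_injective ((Finset.coe_min' _).trans hBi)⟩

lemma erase (h : IsBlockFamily S F) {B : Finset α} (hB : B ∈ F) :
    IsBlockFamily (S \ B) (F.erase B) := by
  refine ⟨?_, fun C hC D hD => h.disjoint C (mem_of_mem_erase hC) D (mem_of_mem_erase hD),
    fun C hC => h.nonempty C (mem_of_mem_erase hC)⟩
  ext x
  simp only [Finset.mem_sup, mem_erase, id, mem_sdiff]
  constructor
  · rintro ⟨C, ⟨hCB, hC⟩, hx⟩
    exact ⟨h.subset hC hx, fun hxB => hCB (h.disjoint C hC B hB x hx hxB)⟩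
  · rintro ⟨hx, hxB⟩
    obtain ⟨C, hC, hxC⟩ := h.exists_mem hx
    exact ⟨C, ⟨fun hCB => hxB (hCB ▸ hxC), hC⟩, hxC⟩

lemma insert {B : Finset α} (h : IsBlockFamily (S \ B) F) (hBS : B ⊆ S) (hB : B.Nonempty) :
    IsBlockFamily S (insert B F) := by
  have hdisj : ∀ C ∈ F, ∀ x ∈ C, x ∉ B := fun C hC x hx => (mem_sdiff.1 (h.subset hC hx)).2
  refine ⟨?_, ?_, ?_⟩
  · rw [Finset.sup_insert, h.sup_eq]
    exact Finset.union_sdiff_of_subset hBS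
  · intro C hC D hD x hxC hxD
    rcases mem_insert.1 hC with rfl | hCF <;> rcases mem_insert.1 hD with rfl | hDF
    · rfl
    · exact absurd hxC (hdisj D hDF x hxD)
    · exact absurd hxD (hdisj C hCF x hxC)
    · exact h.disjoint C hCF D hDF x hxC hxD
  · intro C hC
    rcases mem_insert.1 hC with rfl | hC
    exacts [hB, h.nonempty C hC]

/-- In a non-crossing family, the block with the largest minimum is an interval of `S`. -/
lemma mem_last_block (h : IsBlockFamily S F) (hF : NonCrossingFamily F) {B : Finset α}
    (hB : B ∈ F) {i : α} (hi : B.min = (i : WithTop α))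
    (hmax : ∀ C ∈ F, ∀ j : α, C.min = (j : WithTop α) → j ≤ i)
    {x y : α} (hx : x ∈ S) (hix : i ≤ x) (hy : y ∈ B) (hxy : x ≤ y) : x ∈ B := by
  obtain ⟨C, hC, hxC⟩ := h.exists_mem hx
  obtain ⟨j, hj⟩ := h.exists_min hC
  have hiB := Finset.mem_of_min hi
  have hjC := Finset.mem_of_min hj
  rcases hix.eq_or_lt with rfl | hix
  · exact hiB
  rcases hxy.eq_or_lt with rfl | hxy
  · exact hy
  rcases (hmax C hC j hj).eq_or_lt with rfl | hji
  · exact h.disjoint B hB C hC j hiB hjC ▸ hxC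
  · exact hF j i x y hji hix hxy C hC B hB hjC hxC hiB hy ▸ hxC

theorem eq_of_openerWord_eq (hF : IsBlockFamily S F) (hG : IsBlockFamily S G)
    (hFn : NonCrossingFamily F) (hGn : NonCrossingFamily G)
    (hw : openerWord F = openerWord G) : F = G := by
  induction hn : #F generalizing S F G with
  | zero =>
    have hGF := hF.card_eq.trans ((congrArg _ (by rw [hw])).trans hG.card_eq.symm)
    rw [Finset.card_eq_zero.1 hn, Finset.card_eq_zero.1 (hGF.symm.trans hn)]
  | succ n ih =>
    obtain ⟨B, hB, hBmax⟩ := Finset.exists_max_image F Finset.min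
      (Finset.card_pos.1 (by omega))
    obtain ⟨i, hi⟩ := hF.exists_min hB
    have hmaxF : ∀ C ∈ F, ∀ j : α, C.min = (j : WithTop α) → j ≤ i := fun C hC j hj => by
      have := hBmax C hC
      rwa [hi, hj, WithTop.coe_le_coe] at this
    obtain ⟨C, hC, hCi⟩ := hG.openerWord_ne_zero_iff.1
      (hw ▸ hF.openerWord_ne_zero_iff.2 ⟨B, hB, hi⟩)
    have hmaxG : ∀ D ∈ G, ∀ j : α, D.min = (j : WithTop α) → j ≤ i := fun D hD j hj => by
      obtain ⟨E, hE, hEj⟩ := hF.openerWord_ne_zero_iff.1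
        (hw.symm ▸ hG.openerWord_ne_zero_iff.2 ⟨D, hD, hj⟩)
      exact hmaxF E hE j hEj
    have hcard : #B = #C := by
      rw [← hF.openerWord_eq hB hi, hw, hG.openerWord_eq hC hCi]
    have hBC : B = C := by
      by_cases hsub : B ⊆ C
      · exact Finset.eq_of_subset_of_card_le hsub hcard.ge
      obtain ⟨x, hxB, hxC⟩ := Finset.not_subset.1 hsub
      refine (Finset.eq_of_subset_of_card_le (fun y hy => ?_) hcard.le).symm
      rcases le_total x y with hxy | hyx
      · exact absurd (hG.mem_last_block hGn hC hCi hmaxG (hF.subset hB hxB)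
          (Finset.min_le_of_eq hxB hi) hy hxy) hxC
      · exact hF.mem_last_block hFn hB hi hmaxF (hG.subset hC hy)
          (Finset.min_le_of_eq hy hCi) hxB hyx
    subst hBC
    have herase : F.erase B = G.erase B := by
      refine ih (hF.erase hB) (hG.erase hC) ?_ ?_ ?_ ?_
      · exact fun a b c d hab hbc hcd D hD E hE => hFn a b c d hab hbc hcd D
          (mem_of_mem_erase hD) E (mem_of_mem_erase hE)
      · exact fun a b c d hab hbc hcd D hD E hE => hGn a b c d hab hbc hcd D
          (mem_of_mem_erase hD) E (mem_of_mem_erase hE)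
      · ext x
        have hx := congrFun hw x
        rw [openerWord, openerWord, ← Finset.add_sum_erase _ _ hB,
          ← Finset.add_sum_erase _ _ hC] at hx
        exact Nat.add_left_cancel hx
      · rw [Finset.card_erase_of_mem hB, hn, Nat.add_sub_cancel]
    rw [← Finset.insert_erase hB, herase, Finset.insert_erase hC]

end IsBlockFamily

lemma Finset.exists_initial_segment (T : Finset α) {n : ℕ} (hn : n ≤ #T) :
    ∃ B ⊆ T, #B = n ∧ ∀ x ∈ T, ∀ y ∈ B, x ≤ y → x ∈ B := by
  induction n with
  | zero => exact ⟨∅, by simp⟩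
  | succ n ih =>
    obtain ⟨B, hBT, hBn, hB⟩ := ih (by omega)
    have hne : (T \ B).Nonempty := by
      rw [← Finset.card_pos, Finset.card_sdiff_of_subset hBT]
      omega
    have hmem := mem_sdiff.1 ((T \ B).min'_mem hne)
    refine ⟨insert ((T \ B).min' hne) B, insert_subset hmem.1 hBT, ?_, ?_⟩
    · rw [Finset.card_insert_of_notMem hmem.2, hBn]
    · intro x hx y hy hxy
      by_cases hxB : x ∈ B
      · exact mem_insert_of_mem hxB
      rcases mem_insert.1 hy with rfl | hy
      · rw [mem_insert]
        exact Or.inl (le_antisymm hxy (Finset.min'_le _ _ (mem_sdiff.2 ⟨hx, hxB⟩)))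
      · exact absurd (hB x hx y hy hxy) hxB

theorem IsLukasiewicz.exists_family {S : Finset α} {w : α → ℕ} (hw : IsLukasiewicz S w) :
    ∃ F, IsBlockFamily S F ∧ NonCrossingFamily F ∧ openerWord F = w := by
  induction S using Finset.strongInduction generalizing w with
  | H S ih =>
    rcases S.eq_empty_or_nonempty with rfl | hS
    · refine ⟨∅, ⟨by simp, by simp, by simp⟩, by simp [NonCrossingFamily], ?_⟩
      ext i
      simp [openerWord, hw.eq_zero i]
    obtain ⟨i, hiS, hi0, himax⟩ : ∃ i ∈ S, w i ≠ 0 ∧ ∀ j, i < j → w j = 0 := by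
      have hne : {x ∈ S | w x ≠ 0}.Nonempty := by
        obtain ⟨x, hx, hx0⟩ := Finset.exists_ne_zero_of_sum_ne_zero
          (hw.sum_eq.trans_ne hS.card_ne_zero)
        exact ⟨x, mem_filter.2 ⟨hx, hx0⟩⟩
      have hmem := mem_filter.1 (Finset.max'_mem _ hne)
      refine ⟨_, hmem.1, hmem.2, fun j hj => ?_⟩
      by_contra hj0
      have hjS : j ∈ S := by
        by_contra hjS
        exact hj0 (hw.eq_zero j hjS)
      exact hj.not_ge (Finset.le_max' _ j (mem_filter.2 ⟨hjS, hj0⟩))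
    have hsplit : ∑ x ∈ S with x < i, w x + w i = #S := by
      rw [← hw.sum_eq, ← Finset.sum_filter_add_sum_filter_not S (· < i) w]
      congr 1
      refine (Finset.sum_eq_single_of_mem i (by simp [hiS]) fun x hx hxi => ?_).symm
      exact himax x (lt_of_le_of_ne (not_lt.1 (mem_filter.1 hx).2) (Ne.symm hxi))
    have hle : w i ≤ #{x ∈ S | ¬ x < i} := by
      have h₁ := Finset.card_filter_add_card_filter_not (s := S) (· < i)
      have h₂ := hw.card_le_sum i
      omega
    obtain ⟨B, hBT, hBcard, hBseg⟩ := Finset.exists_initial_segment _ hle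
    have hBS : B ⊆ S := hBT.trans (filter_subset _ _)
    have hBi : ∀ x ∈ B, i ≤ x := fun x hx => not_lt.1 (mem_filter.1 (hBT hx)).2
    have hBne : B.Nonempty := Finset.card_ne_zero.1 (hBcard ▸ hi0)
    have hiB : i ∈ B := by
      obtain ⟨y, hy⟩ := hBne
      exact hBseg i (by simp [hiS]) y hy (hBi y hy)
    have hmin : B.min = (i : WithTop α) :=
      le_antisymm (Finset.min_le hiB) (Finset.le_min fun x hx => WithTop.coe_le_coe.2 (hBi x hx))
    have hseg : ∀ x ∈ S, i ≤ x → ∀ y ∈ B, x ≤ y → x ∈ B := fun x hx hix =>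
      hBseg x (mem_filter.2 ⟨hx, hix.not_gt⟩)
    have hzero : ∀ x, i ≤ x → Function.update w i 0 x = 0 := fun x hx => by
      rcases hx.eq_or_lt with rfl | hx
      · simp
      · rw [Function.update_of_ne hx.ne', himax x hx]
    have hlow : ∀ x, x < i → Function.update w i 0 x = w x := fun x hx =>
      Function.update_of_ne hx.ne _ _
    have hfilter : ∀ j ≤ i, {x ∈ S \ B | x < j} = {x ∈ S | x < j} := fun j hj => by
      ext x
      simp only [mem_filter, mem_sdiff]
      exact ⟨fun h => ⟨h.1.1, h.2⟩,
        fun h => ⟨⟨h.1, fun hxB => ((hBi x hxB).trans_lt h.2).not_ge hj⟩, h.2⟩⟩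
    have hsum : ∀ j, i ≤ j →
        ∑ x ∈ S \ B with x < j, Function.update w i 0 x = #(S \ B) := fun j hj => by
      rw [Finset.card_sdiff_of_subset hBS, hBcard, ← hsplit, Nat.add_sub_cancel, ← hfilter i le_rfl]
      symm
      rw [← Finset.sum_congr rfl fun x hx => hlow x (mem_filter.1 hx).2]
      refine Finset.sum_subset (fun x hx => ?_) fun x _ hx' => hzero x ?_
      · exact mem_filter.2 ⟨(mem_filter.1 hx).1, (mem_filter.1 hx).2.trans_le hj⟩
      · by_contra hxi
        exact hx' (mem_filter.2 ⟨by simp_all, not_le.1 hxi⟩)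
    have hw' : IsLukasiewicz (S \ B) (Function.update w i 0) := by
      refine ⟨fun x hx => ?_, ?_, fun j => ?_⟩
      · by_cases hxS : x ∈ S
        · exact hzero x (hBi x (by simpa [hxS] using hx))
        · rw [Function.update_of_ne (ne_of_mem_of_not_mem hiS hxS).symm, hw.eq_zero x hxS]
      · rw [← hsum i le_rfl]
        refine (Finset.sum_subset (filter_subset _ _) fun x hx hx' => hzero x ?_).symm
        by_contra hxi
        exact hx' (mem_filter.2 ⟨hx, not_le.1 hxi⟩)
      · rcases le_total j i with hj | hj
        · rw [hfilter j hj, Finset.sum_congr rfl fun x hx =>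
            hlow x ((mem_filter.1 hx).2.trans_le hj)]
          exact hw.card_le_sum j
        · rw [hsum j hj]
          exact Finset.card_filter_le _ _
    obtain ⟨F, hF, hFn, hFw⟩ := ih (S \ B) (Finset.sdiff_ssubset hBS hBne) hw'
    have hBF : B ∉ F := fun h => (mem_sdiff.1 (hF.subset h hiB)).2 hiB
    refine ⟨insert B F, hF.insert hBS hBne, ?_, ?_⟩
    · intro a b c d hab hbc hcd X hX Y hY haX hcX hbY hdY
      rcases mem_insert.1 hX with rfl | hXF <;> rcases mem_insert.1 hY with rfl | hYF
      · rfl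
      · have hb := mem_sdiff.1 (hF.subset hYF hbY)
        exact absurd (hseg b hb.1 ((hBi a haX).trans hab.le) c hcX hbc.le) hb.2
      · have hc := mem_sdiff.1 (hF.subset hXF hcX)
        exact absurd (hseg c hc.1 ((hBi b hbY).trans hbc.le) d hdY hcd.le) hc.2
      · exact hFn a b c d hab hbc hcd X hXF Y hYF haX hcX hbY hdY
    · ext x
      have hx : openerWord F x = Function.update w i 0 x := congrFun hFw x
      rw [openerWord] at hx
      rw [openerWord, Finset.sum_insert hBF, hx, hmin, hBcard]
      rcases eq_or_ne x i with rfl | hxi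
      · simp
      · simp [hxi, hxi.symm]

end Words
/-- The number of compositions of `j` into `b` positive parts. -/
def compositionCount : ℕ → ℕ → ℕ
  | 0, 0 => 1
  | _ + 1, 0 => 0
  | 0, _ + 1 => 0
  | j + 1, b + 1 => j.choose b

lemma compositionCount_succ (j b : ℕ) :
    compositionCount (j + 1) (b + 1) = compositionCount j (b + 1) + compositionCount j b := by
  cases j <;> cases b <;> simp [compositionCount, Nat.choose_succ_succ, add_comm]

lemma sum_compositionCount (j b : ℕ) :
    ∑ t ∈ range j, compositionCount t b = compositionCount j (b + 1) := by
  induction j with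
  | zero => rfl
  | succ j ih => rw [Finset.sum_range_succ, ih, compositionCount_succ]

lemma sum_mul_compositionCount (j b : ℕ) :
    (b + 1) * ∑ t ∈ range j, (j - t) * compositionCount t b = j * compositionCount j (b + 1) := by
  have hsum : ∀ j, ∑ t ∈ range j, (j - t) * compositionCount t b
      = compositionCount (j + 1) (b + 2) := by
    intro j
    induction j with
    | zero => simp [compositionCount]
    | succ j ih =>
      rw [compositionCount_succ, ← ih, ← sum_compositionCount, Finset.sum_range_succ,
        Finset.sum_range_succ _ j, ← add_assoc, ← Finset.sum_add_distrib]
      congr 1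
      · refine Finset.sum_congr rfl fun t ht => ?_
        rw [Nat.sub_add_comm (mem_range.1 ht).le]
        ring
      · simp
  rw [hsum]
  cases j with
  | zero => simp [compositionCount]
  | succ j =>
    simp only [compositionCount]
    rw [mul_comm, ← Nat.add_one_mul_choose_eq]

/-- Words of length `m` and weight `j` with `b` nonzero letters such that, with an initial credit
of `h` and each letter counted twice, every prefix weighs at least its length. -/
def ballotWords (m h j b : ℕ) : Finset (Fin m → ℕ) :=
  {v ∈ Finset.piAntidiag univ j | #{i | v i ≠ 0} = b ∧
    ∀ i : Fin m, (i : ℕ) ≤ h + 2 * ∑ x with x < i, v x}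

lemma mem_ballotWords {m h j b : ℕ} {v : Fin m → ℕ} :
    v ∈ ballotWords m h j b ↔ ∑ i, v i = j ∧ #{i | v i ≠ 0} = b ∧
      ∀ i : Fin m, (i : ℕ) ≤ h + 2 * ∑ x with x < i, v x := by
  simp [ballotWords, Finset.mem_piAntidiag]

lemma cons_mem_ballotWords {m h j b t : ℕ} {v : Fin m → ℕ} (hm : h + 2 * (t + j) = m + 1) :
    (Fin.cons t v : Fin (m + 1) → ℕ) ∈ ballotWords (m + 1) h (t + j) b ↔
      1 ≤ h + 2 * t ∧ ∑ i, v i = j ∧ (if t ≠ 0 then 1 else 0) + #{i | v i ≠ 0} = b ∧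
      ∀ i : Fin m, (i : ℕ) ≤ (h + 2 * t - 1) + 2 * ∑ x with x < i, v x := by
  have hsum : ∀ i : Fin m, ∑ x with x < i.succ, (Fin.cons t v : Fin (m + 1) → ℕ) x
      = t + ∑ x with x < i, v x := fun i => by
    rw [Finset.sum_filter, Fin.sum_univ_succ, Finset.sum_filter]
    simp
  have hcard : #{i | (Fin.cons t v : Fin (m + 1) → ℕ) i ≠ 0}
      = (if t ≠ 0 then 1 else 0) + #{i | v i ≠ 0} := by
    rw [Fin.card_filter_univ_succ]
    split_ifs <;> simp_all [add_comm]
  rw [mem_ballotWords, Fin.sum_univ_succ, Fin.forall_fin_succ, hcard]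
  simp only [Fin.cons_zero, Fin.cons_succ, Fin.val_zero, Fin.val_succ, hsum, zero_le, true_and,
    Nat.add_left_cancel_iff]
  constructor
  · rintro ⟨h₁, h₂, h₃⟩
    have h₀ : 1 ≤ h + 2 * t := by
      cases m with
      | zero => simp at h₁; omega
      | succ m => simpa using h₃ 0
    exact ⟨h₀, h₁, h₂, fun i => by have := h₃ i; omega⟩
  · rintro ⟨h₀, h₁, h₂, h₃⟩
    exact ⟨h₁, h₂, fun i => by have := h₃ i; omega⟩

lemma card_ballotWords_filter {m h j b c s : ℕ} (hm : h + 2 * (s + j) = m + 1)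
    (hs : 1 ≤ h + 2 * s) (hc : (if s ≠ 0 then 1 else 0) + b = c) :
    #{v ∈ ballotWords (m + 1) h (s + j) c | v 0 = s} = #(ballotWords m (h + 2 * s - 1) j b) := by
  symm
  refine Finset.card_bij (fun v _ => Fin.cons s v) ?_ ?_ ?_
  · intro v hv
    rw [mem_ballotWords] at hv
    rw [mem_filter, cons_mem_ballotWords hm]
    exact ⟨⟨hs, hv.1, by rw [hv.2.1, hc], hv.2.2⟩, rfl⟩
  · intro v _ v' _ hvv'
    exact Fin.cons_right_injective _ hvv'
  · intro v hv
    obtain ⟨hv, hv0⟩ := mem_filter.1 hv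
    rw [← Fin.cons_self_tail v, hv0, cons_mem_ballotWords hm] at hv
    refine ⟨Fin.tail v, mem_ballotWords.2 ⟨hv.2.1, by omega, hv.2.2.2⟩, ?_⟩
    rw [← hv0, Fin.cons_self_tail]

lemma card_ballotWords_eq_sum (m h j b : ℕ) :
    #(ballotWords (m + 1) h j b) = #{v ∈ ballotWords (m + 1) h j b | v 0 = 0} +
      ∑ t ∈ range j, #{v ∈ ballotWords (m + 1) h j b | v 0 = j - t} := by
  rw [Finset.card_eq_sum_card_fiberwise (f := fun v => v 0) (t := range (j + 1)),
    ← Finset.sum_range_reflect, Finset.sum_range_succ, add_comm]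
  · simp
  · intro v hv
    have hv0 := Finset.single_le_sum (f := v) (fun _ _ => Nat.zero_le _) (mem_univ 0)
    rw [(mem_ballotWords.1 hv).1] at hv0
    simpa [Nat.lt_succ_iff] using hv0

lemma card_ballotWords_filter_zero {m h j b : ℕ} (hm : h + 2 * j = m + 1) :
    #{v ∈ ballotWords (m + 1) h j b | v 0 = 0}
      = if h = 0 then 0 else #(ballotWords m (h - 1) j b) := by
  split_ifs with hh
  · subst hh
    rw [Finset.card_eq_zero, Finset.filter_eq_empty_iff]
    intro v hv hv0
    rw [← Fin.cons_self_tail v, hv0, ← zero_add j, cons_mem_ballotWords (by omega)] at hv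
    omega
  · simpa using card_ballotWords_filter (s := 0) (j := j) (b := b) (c := b) (m := m) (h := h)
      (by omega) (by omega) (by simp)

theorem card_ballotWords {m h j : ℕ} (b : ℕ) (hm : h + 2 * j = m) :
    (m + 1) * #(ballotWords m h j b) = (h + 1) * (m + 1).choose b * compositionCount j b := by
  induction m generalizing h j b with
  | zero =>
    obtain rfl : h = 0 := by omega
    obtain rfl : j = 0 := by omega
    cases b with
    | zero => simp [ballotWords, compositionCount]
    | succ b => simp [ballotWords, compositionCount]
  | succ m ih =>
    have hzero : (m + 1) * #{v ∈ ballotWords (m + 1) h j b | v 0 = 0}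
        = h * (m + 1).choose b * compositionCount j b := by
      rw [card_ballotWords_filter_zero hm]
      split_ifs with hh
      · simp [hh]
      · rw [ih b (by omega), Nat.sub_add_cancel (Nat.one_le_iff_ne_zero.2 hh)]
    cases b with
    | zero =>
      have hpos : ∀ t ∈ range j, #{v ∈ ballotWords (m + 1) h j 0 | v 0 = j - t} = 0 := by
        intro t ht
        rw [Finset.card_eq_zero, Finset.filter_eq_empty_iff]
        intro v hv hv0
        have := (mem_ballotWords.1 hv).2.1
        rw [Finset.card_eq_zero, Finset.filter_eq_empty_iff] at this
        have := not_not.1 (this (mem_univ 0))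
        have := mem_range.1 ht
        omega
      rw [card_ballotWords_eq_sum, Finset.sum_eq_zero hpos, add_zero]
      cases j with
      | zero =>
        obtain rfl : h = m + 1 := by omega
        have := Nat.eq_of_mul_eq_mul_left (Nat.succ_pos m)
          (hzero.trans (by simp [compositionCount] : _ = (m + 1) * 1))
        simp [this, compositionCount]
      | succ j =>
        have : #{v ∈ ballotWords (m + 1) h (j + 1) 0 | v 0 = 0} = 0 := by
          simpa [compositionCount] using hzero
        simp [this, compositionCount]
    | succ b =>
      have hpos : ∀ t ∈ range j, (m + 1) * #{v ∈ ballotWords (m + 1) h j (b + 1) | v 0 = j - t}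
          = (m + 1).choose b * (h * compositionCount t b + 2 * ((j - t) * compositionCount t b)) := by
        intro t ht
        have ht := mem_range.1 ht
        have hfib := card_ballotWords_filter (m := m) (h := h) (s := j - t) (j := t) (b := b)
          (c := b + 1) (by omega) (by omega) (by rw [if_pos (by omega)]; omega)
        rw [Nat.sub_add_cancel ht.le] at hfib
        rw [hfib, ih b (by omega), Nat.sub_add_cancel (by omega)]
        ring
      have hsum : (m + 1) * #(ballotWords (m + 1) h j (b + 1))
          = h * (m + 1).choose (b + 1) * compositionCount j (b + 1) + (m + 1).choose b *
            (h * compositionCount j (b + 1)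
              + 2 * ∑ t ∈ range j, (j - t) * compositionCount t b) := by
        rw [card_ballotWords_eq_sum, mul_add, hzero, Finset.mul_sum, Finset.sum_congr rfl hpos,
          ← Finset.mul_sum, Finset.sum_add_distrib, ← Finset.mul_sum, ← Finset.mul_sum,
          sum_compositionCount]
      have hweight := sum_mul_compositionCount j b
      have hpascal := Nat.choose_succ_succ (m + 1) b
      have habsorb := Nat.add_one_mul_choose_eq (m + 1) b
      have hmul : (m + 1) * (b + 1) ≠ 0 := by positivity
      refine Nat.eq_of_mul_eq_mul_left (Nat.pos_of_ne_zero hmul) ?_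
      simp only [Nat.succ_eq_add_one] at hpascal
      zify at *
      have hm' : (2 * j : ℤ) = m + 1 - h := by linarith
      generalize ((m + 1).choose b : ℤ) = p at *
      generalize ((m + 1).choose (b + 1) : ℤ) = q at *
      generalize ((m + 1 + 1).choose (b + 1) : ℤ) = r at *
      linear_combination ((m : ℤ) + 2) * (b + 1) * hsum + 2 * ((m : ℤ) + 2) * p * hweight
        - ((m : ℤ) + 2) * (b + 1) * h * compositionCount j (b + 1) * hpascal
        + 2 * j * compositionCount j (b + 1) * habsorb
        + (b + 1) * r * compositionCount j (b + 1) * hm'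

lemma Finpartition.isBlockFamily {α : Type*} [LinearOrder α] {S : Finset α} (P : Finpartition S) :
    IsBlockFamily S P.parts :=
  ⟨P.sup_parts, fun _ hB _ hC _ hxB hxC => P.eq_of_mem_parts hB hC hxB hxC,
    fun _ hB => P.nonempty_of_mem_parts hB⟩

lemma IsBlockFamily.exists_finpartition {α : Type*} [LinearOrder α] {S : Finset α}
    {F : Finset (Finset α)} (h : IsBlockFamily S F) : ∃ P : Finpartition S, P.parts = F :=
  ⟨⟨F, Finset.supIndep_iff_pairwiseDisjoint.2 h.pairwiseDisjoint, h.sup_eq,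
    fun hbot => (h.nonempty _ hbot).ne_empty rfl⟩, rfl⟩

lemma IsBlockFamily.forall_even_card_iff {α : Type*} [LinearOrder α] {S : Finset α}
    {F : Finset (Finset α)} (h : IsBlockFamily S F) :
    (∀ B ∈ F, Even #B) ↔ ∀ i, Even (openerWord F i) := by
  constructor
  · intro hF i
    by_cases hi : openerWord F i = 0
    · simp [hi]
    · obtain ⟨B, hB, hBi⟩ := h.openerWord_ne_zero_iff.1 hi
      exact h.openerWord_eq hB hBi ▸ hF B hB
  · intro hF B hB
    obtain ⟨i, hi⟩ := h.exists_min hB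
    exact h.openerWord_eq hB hi ▸ hF i

lemma mem_ballotWords_iff_isLukasiewicz {k b : ℕ} {v : Fin (2 * k) → ℕ} :
    v ∈ ballotWords (2 * k) 0 k b ↔
      IsLukasiewicz univ (fun i => 2 * v i) ∧ #{i | 2 * v i ≠ 0} = b := by
  have hcard : ∀ i : Fin (2 * k), #{x | x < i} = (i : ℕ) := fun i => by
    rw [Finset.filter_gt_eq_Iio, Fin.card_Iio]
  rw [mem_ballotWords]
  constructor
  · rintro ⟨hsum, hb, hpre⟩
    refine ⟨⟨by simp, by simp [← Finset.mul_sum, hsum], fun i => ?_⟩, by simpa using hb⟩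
    rw [hcard, ← Finset.mul_sum]
    simpa using hpre i
  · rintro ⟨hw, hb⟩
    refine ⟨?_, by simpa using hb, fun i => ?_⟩
    · simpa [← Finset.mul_sum] using hw.sum_eq
    · have := hw.card_le_sum i
      rw [hcard, ← Finset.mul_sum] at this
      omega

lemma card_noncrossing_even_eq_card_ballotWords (k b : ℕ) :
    Nat.card {P : Finpartition (Finset.univ : Finset (Fin (2 * k))) //
        IsNonCrossing P ∧ (∀ B ∈ P.parts, Even B.card) ∧ P.parts.card = b}
      = #(ballotWords (2 * k) 0 k b) := by
  have hhalf : ∀ P : Finpartition (Finset.univ : Finset (Fin (2 * k))),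
      (∀ B ∈ P.parts, Even B.card) →
      (fun i => 2 * (openerWord P.parts i / 2)) = openerWord P.parts := fun P hP =>
    funext fun i => Nat.two_mul_div_two_of_even (P.isBlockFamily.forall_even_card_iff.1 hP i)
  let toWord : {P : Finpartition (Finset.univ : Finset (Fin (2 * k))) //
      IsNonCrossing P ∧ (∀ B ∈ P.parts, Even B.card) ∧ P.parts.card = b} →
      ballotWords (2 * k) 0 k b := fun P =>
    ⟨fun i => openerWord P.1.parts i / 2, by
      have hP := hhalf P.1 P.2.2.1
      rw [mem_ballotWords_iff_isLukasiewicz, hP]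
      refine ⟨P.1.isBlockFamily.isLukasiewicz, ?_⟩
      refine Eq.trans ?_ (P.1.isBlockFamily.card_eq.symm.trans P.2.2.2)
      exact congrArg card (Finset.filter_congr fun i _ => not_congr (Eq.congr_left (congrFun hP i)))⟩
  refine (Nat.card_eq_of_bijective toWord ⟨fun P Q hPQ => ?_, fun v => ?_⟩).trans (by simp)
  · have hword : openerWord P.1.parts = openerWord Q.1.parts := by
      rw [← hhalf P.1 P.2.2.1, ← hhalf Q.1 Q.2.2.1]
      exact funext fun i => congrArg (2 * ·) (congrFun (congrArg Subtype.val hPQ) i)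
    exact Subtype.ext (Finpartition.ext
      (P.1.isBlockFamily.eq_of_openerWord_eq Q.1.isBlockFamily P.2.1 Q.2.1 hword))
  · obtain ⟨hw, hb⟩ := mem_ballotWords_iff_isLukasiewicz.1 v.2
    obtain ⟨F, hF, hFn, hFw⟩ := hw.exists_family
    obtain ⟨P, rfl⟩ := hF.exists_finpartition
    refine ⟨⟨P, hFn, hF.forall_even_card_iff.2 fun i => ?_, ?_⟩, Subtype.ext (funext fun i => ?_)⟩
    · rw [hFw]
      exact even_two_mul _
    · rw [hF.card_eq, hFw]
      exact hb
    · simp [toWord, hFw]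

/-- The number of non-crossing partitions of `{1,…,2k}` into blocks of even size,
having exactly `b` blocks, is the Fuss–Narayana number
`F_{k,b} = (1/b)·binom(k−1,b−1)·binom(2k,b−1)`. -/
theorem card_noncrossing_even_blocks (k b : ℕ) (hk : 1 ≤ k) (hb : 1 ≤ b) :
    (Nat.card {P : Finpartition (Finset.univ : Finset (Fin (2 * k))) //
        IsNonCrossing P ∧ (∀ B ∈ P.parts, Even B.card) ∧ P.parts.card = b} : ℚ)
      = (1 / b) * (k - 1).choose (b - 1) * (2 * k).choose (b - 1) := by
  rw [card_noncrossing_even_eq_card_ballotWords]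
  have hcard := card_ballotWords (h := 0) (j := k) b (zero_add _)
  obtain ⟨k, rfl⟩ := Nat.exists_eq_add_of_le' hk
  obtain ⟨b, rfl⟩ := Nat.exists_eq_add_of_le' hb
  have habsorb := Nat.add_one_mul_choose_eq (2 * (k + 1)) b
  simp only [compositionCount, Nat.add_sub_cancel] at hcard ⊢
  have hne : ((2 * (k + 1) + 1 : ℕ) : ℚ) ≠ 0 := by positivity
  have hb0 : ((b + 1 : ℕ) : ℚ) ≠ 0 := by positivity
  rw [mul_assoc, one_div, eq_inv_mul_iff_mul_eq₀ hb0]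
  refine mul_left_cancel₀ hne ?_
  norm_cast
  linear_combination (b + 1) * hcard - k.choose b * habsorb
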